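/- Let u ∈ ℝⁿ be a standard Gaussian random vector. Then for every odd positive integer k, E[‖u‖ᵏ u uᵀ] ⪯ (n+1)(n+3)···(n+k) · n^{-1/2} · I in the Loewner order. -/

import Mathlib

open MeasureTheory ProbabilityTheory

/-- The standard Gaussian measure N(0, I) on ℝⁿ. -/
noncomputable def stdGaussian (n : ℕ) : Measure (EuclideanSpace ℝ (Fin n)) :=
  (Measure.pi fun _ : Fin n => gaussianReal 0 1).map (EuclideanSpace.equiv (Fin n) ℝ).symm

/-!
The standard Gaussian on a `d`-dimensional space is orthogonally invariant, and reflections show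
that for such a law `E[f(‖u‖) ⟪v, u⟫ ⟪w, u⟫] = (E[f(‖u‖) ‖u‖²] / d) ⟪v, w⟫`. Hence
`E[‖u‖ᵏ u uᵀ] = (E‖u‖ᵏ⁺² / d) I`. The norm has the chi distribution, and `Γ(s + 1) = s Γ(s)` turns
its moment formula into `E‖u‖ᵖ⁺² = (d + p) E‖u‖ᵖ`, which reduces odd moments to `E‖u‖`. Finally
`E‖u‖ ≤ √(E‖u‖²) = √d`, which is equivalent to `√2 Γ((d + 1)/2) / Γ(d/2) ≤ √d`.
-/

section OrthogonalInvariance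

open scoped RealInnerProductSpace

variable {E F : Type*} [NormedAddCommGroup E] [InnerProductSpace ℝ E] [MeasurableSpace E]
  [NormedAddCommGroup F] [NormedSpace ℝ F] {μ : Measure E}

/-- A measure on a real inner product space is orthogonally invariant if every linear isometric
automorphism preserves it. -/
def IsOrthogonallyInvariant (μ : Measure E) : Prop :=
  ∀ e : E ≃ₗᵢ[ℝ] E, MeasurePreserving e μ μ

variable [BorelSpace E]

namespace IsOrthogonallyInvariant

lemma integral_comp (hμ : IsOrthogonallyInvariant μ) (e : E ≃ₗᵢ[ℝ] E) (f : E → F) :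
    ∫ u, f (e u) ∂μ = ∫ u, f u ∂μ :=
  (hμ e).integral_comp e.toHomeomorph.measurableEmbedding f

lemma integral_fun_norm_mul_inner_mul_inner_map (hμ : IsOrthogonallyInvariant μ)
    (e : E ≃ₗᵢ[ℝ] E) (f : ℝ → ℝ) (v w : E) :
    ∫ u, f ‖u‖ * (⟪e v, u⟫ * ⟪e w, u⟫) ∂μ = ∫ u, f ‖u‖ * (⟪v, u⟫ * ⟪w, u⟫) ∂μ := by
  rw [← hμ.integral_comp e]
  simp only [LinearIsometryEquiv.norm_map, LinearIsometryEquiv.inner_map_map]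

lemma integral_fun_norm_mul_inner_mul_inner_of_inner_eq_zero (hμ : IsOrthogonallyInvariant μ)
    (f : ℝ → ℝ) {v w : E} (hvw : ⟪v, w⟫ = 0) :
    ∫ u, f ‖u‖ * (⟪v, u⟫ * ⟪w, u⟫) ∂μ = 0 := by
  have hv : (ℝ ∙ v)ᗮ.reflection v = -v :=
    Submodule.reflection_orthogonalComplement_singleton_eq_neg v
  have hw : (ℝ ∙ v)ᗮ.reflection w = w :=
    Submodule.reflection_mem_subspace_eq_self
      (Submodule.mem_orthogonal_singleton_iff_inner_right.2 hvw)
  have hneg := hμ.integral_fun_norm_mul_inner_mul_inner_map (ℝ ∙ v)ᗮ.reflection f v w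
  simp only [hv, hw, inner_neg_left, neg_mul, mul_neg, integral_neg] at hneg
  linarith

lemma integral_fun_norm_mul_inner_sq_eq_of_norm_eq (hμ : IsOrthogonallyInvariant μ)
    (f : ℝ → ℝ) {v w : E} (hvw : ‖v‖ = ‖w‖) :
    ∫ u, f ‖u‖ * ⟪v, u⟫ ^ 2 ∂μ = ∫ u, f ‖u‖ * ⟪w, u⟫ ^ 2 ∂μ := by
  simpa only [Submodule.reflection_sub hvw, ← sq] using
    (hμ.integral_fun_norm_mul_inner_mul_inner_map (ℝ ∙ (v - w))ᗮ.reflection f v v).symm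

end IsOrthogonallyInvariant

lemma integrable_fun_norm_mul_inner_sq {f : ℝ → ℝ}
    (hf : Integrable (fun u => f ‖u‖ * ‖u‖ ^ 2) μ) (v : E) :
    Integrable (fun u => f ‖u‖ * ⟪v, u⟫ ^ 2) μ := by
  have hbound (u : E) : ‖⟪v, u⟫ ^ 2 / ‖u‖ ^ 2‖ ≤ ‖v‖ ^ 2 := by
    rw [Real.norm_of_nonneg (by positivity)]
    refine div_le_of_le_mul₀ (by positivity) (by positivity) ?_
    rw [← mul_pow]
    exact sq_le_sq' (neg_le_of_abs_le (abs_real_inner_le_norm v u)) (real_inner_le_norm v u)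
  have hmeas : Measurable fun u : E => ⟪v, u⟫ ^ 2 / ‖u‖ ^ 2 :=
    ((innerSL ℝ v).continuous.measurable.pow_const 2).div (measurable_norm.pow_const 2)
  refine (hf.mul_bdd hmeas.aestronglyMeasurable (ae_of_all _ hbound)).congr
    (ae_of_all _ fun u => ?_)
  rcases eq_or_ne u 0 with rfl | hu
  · simp
  · have := norm_ne_zero_iff.2 hu
    field_simp

variable {ι : Type*} [Fintype ι]

lemma IsOrthogonallyInvariant.card_mul_integral_fun_norm_mul_inner_sq
    (hμ : IsOrthogonallyInvariant μ) (b : OrthonormalBasis ι ℝ E) {f : ℝ → ℝ}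
    (hf : Integrable (fun u => f ‖u‖ * ‖u‖ ^ 2) μ) (i : ι) :
    Fintype.card ι * ∫ u, f ‖u‖ * ⟪b i, u⟫ ^ 2 ∂μ = ∫ u, f ‖u‖ * ‖u‖ ^ 2 ∂μ := by
  have hsame (j : ι) : ∫ u, f ‖u‖ * ⟪b j, u⟫ ^ 2 ∂μ = ∫ u, f ‖u‖ * ⟪b i, u⟫ ^ 2 ∂μ :=
    hμ.integral_fun_norm_mul_inner_sq_eq_of_norm_eq f (by simp only [b.norm_eq_one])
  calc Fintype.card ι * ∫ u, f ‖u‖ * ⟪b i, u⟫ ^ 2 ∂μ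
      = ∑ j, ∫ u, f ‖u‖ * ⟪b j, u⟫ ^ 2 ∂μ := by
        simp only [hsame, Finset.sum_const, Finset.card_univ, nsmul_eq_mul]
    _ = ∫ u, ∑ j, f ‖u‖ * ⟪b j, u⟫ ^ 2 ∂μ :=
        (integral_finsetSum _ fun j _ => integrable_fun_norm_mul_inner_sq hf (b j)).symm
    _ = ∫ u, f ‖u‖ * ‖u‖ ^ 2 ∂μ := by
        simp only [← Finset.mul_sum, b.sum_sq_inner_right]

lemma IsOrthogonallyInvariant.matrix_integral_fun_norm_mul_inner_mul_inner [DecidableEq ι]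
    (hμ : IsOrthogonallyInvariant μ) (b : OrthonormalBasis ι ℝ E) {f : ℝ → ℝ}
    (hf : Integrable (fun u => f ‖u‖ * ‖u‖ ^ 2) μ) :
    (Matrix.of fun i j => ∫ u, f ‖u‖ * (⟪b i, u⟫ * ⟪b j, u⟫) ∂μ) =
      ((∫ u, f ‖u‖ * ‖u‖ ^ 2 ∂μ) / Fintype.card ι) • (1 : Matrix ι ι ℝ) := by
  ext i j
  rcases eq_or_ne i j with rfl | hij
  · have : Nonempty ι := ⟨i⟩
    rw [← hμ.card_mul_integral_fun_norm_mul_inner_sq b hf i,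
      mul_div_cancel_left₀ _ (by positivity)]
    simp [sq]
  · simpa [hij] using
      hμ.integral_fun_norm_mul_inner_mul_inner_of_inner_eq_zero f (b.inner_eq_zero hij)

end OrthogonalInvariance

section StandardGaussian

variable {E : Type*} [NormedAddCommGroup E] [InnerProductSpace ℝ E] [FiniteDimensional ℝ E]
  [MeasurableSpace E] [BorelSpace E]

lemma isOrthogonallyInvariant_stdGaussian :
    IsOrthogonallyInvariant (ProbabilityTheory.stdGaussian E) :=
  fun e => ⟨e.continuous.measurable, stdGaussian_map e⟩

lemma integrable_norm_pow_stdGaussian (k : ℕ) :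
    Integrable (fun x => ‖x‖ ^ k) (ProbabilityTheory.stdGaussian E) :=
  (IsGaussian.memLp_id (ProbabilityTheory.stdGaussian E) k
    (ENNReal.natCast_ne_top k)).integrable_norm_pow'

lemma matrix_integral_norm_pow_mul_coord_mul_coord_stdGaussian
    {ι : Type*} [Fintype ι] [DecidableEq ι] (k : ℕ) :
    (Matrix.of fun i j => ∫ u, ‖u‖ ^ k * (u i * u j)
      ∂ProbabilityTheory.stdGaussian (EuclideanSpace ℝ ι)) =
      ((∫ u, ‖u‖ ^ (k + 2) ∂ProbabilityTheory.stdGaussian (EuclideanSpace ℝ ι)) /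
        Fintype.card ι) • (1 : Matrix ι ι ℝ) := by
  have hint := integrable_norm_pow_stdGaussian (E := EuclideanSpace ℝ ι) (k + 2)
  simp only [pow_add] at hint ⊢
  simpa [EuclideanSpace.basisFun_inner, -EuclideanSpace.basisFun_apply] using
    isOrthogonallyInvariant_stdGaussian.matrix_integral_fun_norm_mul_inner_mul_inner
      (EuclideanSpace.basisFun ι ℝ) (f := (· ^ k)) hint

end StandardGaussian

section Density

open Module

variable {E : Type*} [NormedAddCommGroup E] [InnerProductSpace ℝ E]

variable (E) in
/-- The density of the standard Gaussian measure on `E` with respect to Lebesgue measure, in the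
form `(2π) ^ (-d / 2) * exp (-‖x‖² / 2)` with `d` the dimension of `E`. -/
noncomputable def stdGaussianDensity (x : E) : ℝ :=
  ((2 * Real.pi) ^ (finrank ℝ E / 2 : ℝ))⁻¹ * Real.exp (-(1 / 2) * ‖x‖ ^ 2)

lemma stdGaussianDensity_nonneg (x : E) : 0 ≤ stdGaussianDensity E x := by
  unfold stdGaussianDensity
  positivity

lemma continuous_stdGaussianDensity : Continuous (stdGaussianDensity E) := by
  unfold stdGaussianDensity
  fun_prop

variable [FiniteDimensional ℝ E] [MeasurableSpace E] [BorelSpace E]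

lemma integrable_stdGaussianDensity : Integrable (stdGaussianDensity E) := by
  refine Integrable.const_mul (.of_integral_ne_zero ?_) _
  rw [GaussianFourier.integral_rexp_neg_mul_sq_norm one_half_pos]
  positivity

lemma integral_stdGaussianDensity_mul_cexp_inner (t : E) :
    ∫ x, (stdGaussianDensity E x : ℂ) * Complex.exp (inner ℝ x t * Complex.I) =
      Complex.exp (-‖t‖ ^ 2 / 2) := by
  have hnorm : ((2 * Real.pi) ^ (finrank ℝ E / 2 : ℝ) : ℝ) =
      ((Real.pi : ℂ) / (1 / 2)) ^ (finrank ℝ E / 2 : ℂ) := by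
    rw [Complex.ofReal_cpow (by positivity)]
    push_cast
    ring_nf
  have hnorm_ne : ((Real.pi : ℂ) / (1 / 2)) ^ (finrank ℝ E / 2 : ℂ) ≠ 0 := by
    rw [← hnorm]
    exact_mod_cast (by positivity : (2 * Real.pi) ^ (finrank ℝ E / 2 : ℝ) ≠ 0)
  have hcexp (x : E) : (stdGaussianDensity E x : ℂ) * Complex.exp (inner ℝ x t * Complex.I) =
      Complex.exp (-(1 / 2) * ‖x‖ ^ 2 + Complex.I * inner ℝ t x) /
        (Real.pi / (1 / 2)) ^ (finrank ℝ E / 2 : ℂ) := by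
    rw [← hnorm, Complex.exp_add, real_inner_comm, mul_comm Complex.I, stdGaussianDensity]
    push_cast
    ring
  simp_rw [hcexp]
  rw [integral_div, GaussianFourier.integral_cexp_neg_mul_sq_norm_add (by norm_num),
    mul_div_cancel_left₀ _ hnorm_ne, Complex.I_sq]
  ring_nf

lemma stdGaussian_eq_withDensity :
    ProbabilityTheory.stdGaussian E =
      volume.withDensity fun x => ENNReal.ofReal (stdGaussianDensity E x) := by
  have : IsFiniteMeasure (volume.withDensity fun x => ENNReal.ofReal (stdGaussianDensity E x)) :=
    isFiniteMeasure_withDensity_ofReal integrable_stdGaussianDensity.2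
  refine Measure.ext_of_charFun (funext fun t => ?_)
  rw [charFun_stdGaussian, charFun_apply, integral_withDensity_eq_integral_toReal_smul
    continuous_stdGaussianDensity.measurable.ennreal_ofReal
    (ae_of_all _ fun _ => ENNReal.ofReal_lt_top)]
  simp_rw [ENNReal.toReal_ofReal (stdGaussianDensity_nonneg _), Complex.real_smul]
  exact (integral_stdGaussianDensity_mul_cexp_inner t).symm

end Density

section NormMoments

open Module

variable {E F : Type*} [NormedAddCommGroup E] [InnerProductSpace ℝ E] [FiniteDimensional ℝ E]
  [MeasurableSpace E] [BorelSpace E] [Nontrivial E] [NormedAddCommGroup F] [NormedSpace ℝ F]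

variable (E) in
lemma finrank_mul_volume_real_unit_ball :
    finrank ℝ E * volume.real (Metric.ball (0 : E) 1) =
      2 * Real.pi ^ (finrank ℝ E / 2 : ℝ) / Real.Gamma (finrank ℝ E / 2) := by
  have hd : (0 : ℝ) < finrank ℝ E := by exact_mod_cast finrank_pos (R := ℝ) (M := E)
  have := Real.Gamma_pos_of_pos (half_pos hd)
  rw [Measure.real, InnerProductSpace.volume_ball, ENNReal.ofReal_one, one_pow, one_mul,
    ENNReal.toReal_ofReal (by positivity), Real.Gamma_add_one (half_pos hd).ne',
    Real.sqrt_eq_rpow, ← Real.rpow_mul_natCast Real.pi_nonneg, one_div_mul_eq_div]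
  field_simp

lemma integral_fun_norm_stdGaussian (f : ℝ → F) :
    ∫ x, f ‖x‖ ∂ProbabilityTheory.stdGaussian E =
      (2 / (2 ^ (finrank ℝ E / 2 : ℝ) * Real.Gamma (finrank ℝ E / 2))) •
        ∫ y in Set.Ioi (0 : ℝ), (y ^ (finrank ℝ E - 1) * Real.exp (-(1 / 2) * y ^ 2)) • f y := by
  rw [stdGaussian_eq_withDensity, integral_withDensity_eq_integral_toReal_smul
    continuous_stdGaussianDensity.measurable.ennreal_ofReal
    (ae_of_all _ fun _ => ENNReal.ofReal_lt_top)]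
  simp_rw [ENNReal.toReal_ofReal (stdGaussianDensity_nonneg _), stdGaussianDensity, mul_smul]
  rw [integral_smul, integral_fun_norm_addHaar volume
    (fun y => Real.exp (-(1 / 2) * y ^ 2) • f y), ← Nat.cast_smul_eq_nsmul ℝ, smul_smul,
    smul_smul, mul_assoc, finrank_mul_volume_real_unit_ball]
  congr 1
  rw [Real.mul_rpow zero_le_two Real.pi_nonneg]
  field_simp

lemma integral_norm_rpow_stdGaussian {p : ℝ} (hp : -finrank ℝ E < p) :
    ∫ x, ‖x‖ ^ p ∂ProbabilityTheory.stdGaussian E =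
      2 ^ (p / 2) * Real.Gamma ((finrank ℝ E + p) / 2) / Real.Gamma (finrank ℝ E / 2) := by
  have hd : 1 ≤ finrank ℝ E := finrank_pos
  have hradial : ∫ y in Set.Ioi (0 : ℝ),
        (y ^ (finrank ℝ E - 1) * Real.exp (-(1 / 2) * y ^ 2)) • y ^ p =
      ∫ y in Set.Ioi (0 : ℝ),
        y ^ (finrank ℝ E + p - 1) * Real.exp (-(1 / 2) * y ^ (2 : ℝ)) := by
    refine setIntegral_congr_fun measurableSet_Ioi fun y hy => ?_
    have hpow : y ^ (finrank ℝ E + p - 1) = y ^ (finrank ℝ E - 1) * y ^ p := by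
      rw [add_sub_right_comm, Real.rpow_add hy, ← Nat.cast_pred hd, Real.rpow_natCast]
    simp only [hpow, Real.rpow_two, smul_eq_mul]
    ring
  rw [integral_fun_norm_stdGaussian (· ^ p), hradial,
    integral_rpow_mul_exp_neg_mul_rpow two_pos (by linarith) one_half_pos, sub_add_cancel,
    one_div (2 : ℝ), Real.inv_rpow zero_le_two, neg_div, Real.rpow_neg zero_le_two, inv_inv,
    add_div, Real.rpow_add two_pos, smul_eq_mul]
  field_simp

lemma integral_norm_rpow_add_two_stdGaussian {p : ℝ} (hp : -finrank ℝ E < p) :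
    ∫ x, ‖x‖ ^ (p + 2) ∂ProbabilityTheory.stdGaussian E =
      (finrank ℝ E + p) * ∫ x, ‖x‖ ^ p ∂ProbabilityTheory.stdGaussian E := by
  rw [integral_norm_rpow_stdGaussian hp, integral_norm_rpow_stdGaussian (by linarith),
    show (finrank ℝ E + (p + 2)) / 2 = (finrank ℝ E + p) / 2 + 1 by ring,
    Real.Gamma_add_one (by linarith), add_div p, div_self two_ne_zero,
    Real.rpow_add_one two_ne_zero]
  ring

lemma integral_norm_rpow_add_two_mul_stdGaussian {p : ℝ} (hp : -finrank ℝ E < p) (m : ℕ) :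
    ∫ x, ‖x‖ ^ (p + 2 * m) ∂ProbabilityTheory.stdGaussian E =
      (∏ i ∈ Finset.range m, (finrank ℝ E + (2 * i + p))) *
        ∫ x, ‖x‖ ^ p ∂ProbabilityTheory.stdGaussian E := by
  induction m with
  | zero => simp
  | succ m ih =>
    have hpm : -finrank ℝ E < p + 2 * m := hp.trans_le (le_add_of_nonneg_right (by positivity))
    rw [Nat.cast_succ, mul_add_one, ← add_assoc, integral_norm_rpow_add_two_stdGaussian hpm, ih,
      Finset.prod_range_succ]
    ring

variable (E) in
lemma integral_norm_sq_stdGaussian :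
    ∫ x, ‖x‖ ^ 2 ∂ProbabilityTheory.stdGaussian E = finrank ℝ E := by
  have hd : -(finrank ℝ E : ℝ) < 0 := neg_neg_of_pos (by exact_mod_cast finrank_pos)
  simpa using integral_norm_rpow_add_two_stdGaussian (E := E) hd

variable (E) in
lemma integral_norm_stdGaussian_le :
    ∫ x, ‖x‖ ∂ProbabilityTheory.stdGaussian E ≤ √(finrank ℝ E) := by
  have hmem : MemLp (fun x : E => ‖x‖) 2 (ProbabilityTheory.stdGaussian E) :=
    IsGaussian.memLp_two_id.norm
  have hvar := variance_nonneg (fun x : E => ‖x‖) (ProbabilityTheory.stdGaussian E)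
  rw [variance_eq_sub hmem] at hvar
  exact Real.le_sqrt_of_sq_le ((sub_nonneg.1 hvar).trans_eq (integral_norm_sq_stdGaussian E))

variable (E) in
lemma integral_norm_pow_two_mul_add_one_stdGaussian_le (m : ℕ) :
    ∫ x, ‖x‖ ^ (2 * m + 1) ∂ProbabilityTheory.stdGaussian E ≤
      (∏ i ∈ Finset.range m, ((finrank ℝ E : ℝ) + (2 * i + 1))) * √(finrank ℝ E) := by
  have hd : -(finrank ℝ E : ℝ) < 1 := (neg_nonpos.2 (Nat.cast_nonneg _)).trans_lt one_pos
  have hodd := integral_norm_rpow_add_two_mul_stdGaussian hd m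
  have hcast : (1 + 2 * m : ℝ) = ((2 * m + 1 : ℕ) : ℝ) := by push_cast; ring
  simp only [hcast, Real.rpow_natCast, Real.rpow_one] at hodd
  rw [hodd]
  gcongr
  exact integral_norm_stdGaussian_le E

end NormMoments

lemma stdGaussian_eq_stdGaussian_euclideanSpace (n : ℕ) :
    _root_.stdGaussian n = ProbabilityTheory.stdGaussian (EuclideanSpace ℝ (Fin n)) :=
  map_pi_eq_stdGaussian

/-- For u ~ N(0, I) and odd positive k,
E[‖u‖ᵏ u uᵀ] ⪯ (n+1)(n+3)···(n+k) n^{-1/2} I in the Loewner order. -/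
theorem gaussian_odd_norm_moment_outer (n k : ℕ) (hn : 0 < n) (hk : Odd k) :
    (((∏ i ∈ Finset.range ((k + 1) / 2), ((n : ℝ) + (2 * i + 1))) * (Real.sqrt n)⁻¹) •
        (1 : Matrix (Fin n) (Fin n) ℝ)
      - Matrix.of fun i j => ∫ u, ‖u‖ ^ k * (u i * u j) ∂ stdGaussian n).PosSemidef := by
  have : NeZero n := ⟨hn.ne'⟩
  obtain ⟨m, rfl⟩ := hk
  have hmoment := integral_norm_pow_two_mul_add_one_stdGaussian_le
    (EuclideanSpace ℝ (Fin n)) (m + 1)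
  rw [finrank_euclideanSpace_fin] at hmoment
  rw [stdGaussian_eq_stdGaussian_euclideanSpace,
    matrix_integral_norm_pow_mul_coord_mul_coord_stdGaussian, ← sub_smul, Fintype.card_fin,
    show (2 * m + 1 + 1) / 2 = m + 1 by lia]
  refine Matrix.PosSemidef.one.smul (sub_nonneg.2 ?_)
  rw [← Real.sqrt_div_self, ← mul_div_assoc]
  exact div_le_div_of_nonneg_right hmoment n.cast_nonneg
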